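/- For every real-valued Schwartz function f : ℝ³ → ℝ, set g := 𝓕⁻¹(m · 𝓕f). Then g is a bounded, real-valued, continuously differentiable function with bounded gradient, the integrals below converge absolutely, and 2 ∫_{ℝ³} (x · ∇g(x)) f(x) dx = −3 ∫_{ℝ³} g(x) f(x) dx. (Equivalently, 2∫ x·∇(K∗f) f dx = −3∫ (K∗f) f dx; this reflects the fact that the symbol m is real, even, and homogeneous of degree zero, so that ξ·∇_ξ m(ξ) = 0 for ξ ≠ 0.) -/

import Mathlib

open MeasureTheory FourierTransform SchwartzMap

noncomputable section

-- The dipolar symbol `m(ξ) = (4π/3)(2ξ₃² − ξ₂² − ξ₁²)/|ξ|²`, with `m(0) := 0`.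
open Classical in
def dipm (ξ : EuclideanSpace ℝ (Fin 3)) : ℝ :=
  if ξ = 0 then 0
  else (4 * Real.pi / 3) * (2 * (ξ 2) ^ 2 - (ξ 1) ^ 2 - (ξ 0) ^ 2) / ‖ξ‖ ^ 2

lemma dipm_eq (ξ : EuclideanSpace ℝ (Fin 3)) :
    dipm ξ = (4 * Real.pi / 3) * (2 * (ξ 2) ^ 2 - (ξ 1) ^ 2 - (ξ 0) ^ 2) / ‖ξ‖ ^ 2 := by
  unfold dipm
  split_ifs with h <;> simp [h]

lemma measurable_dipm : Measurable dipm := by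
  rw [funext dipm_eq]
  fun_prop

/-- The dipolar symbol is even and homogeneous of degree zero. -/
lemma dipm_smul {c : ℝ} (hc : c ≠ 0) (ξ : EuclideanSpace ℝ (Fin 3)) :
    dipm (c • ξ) = dipm ξ := by
  by_cases h : ξ = 0
  · simp [h]
  have h' : ‖ξ‖ ≠ 0 := norm_ne_zero_iff.2 h
  simp only [dipm_eq, norm_smul, PiLp.smul_apply, smul_eq_mul, mul_pow, Real.norm_eq_abs, sq_abs]
  field_simp

lemma dipm_neg (ξ : EuclideanSpace ℝ (Fin 3)) : dipm (-ξ) = dipm ξ := by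
  simpa using dipm_smul (c := -1) (by norm_num) ξ

lemma abs_dipm_le (ξ : EuclideanSpace ℝ (Fin 3)) : |dipm ξ| ≤ 8 * Real.pi / 3 := by
  have hpi := Real.pi_pos
  by_cases h : ξ = 0
  · simp only [h, dipm, if_true, abs_zero]
    positivity
  have h' : 0 < ‖ξ‖ ^ 2 := by positivity
  rw [dipm_eq, abs_div, abs_of_pos h', div_le_iff₀ h', abs_mul,
    abs_of_pos (by positivity : 0 < 4 * Real.pi / 3)]
  have key : |2 * (ξ 2) ^ 2 - (ξ 1) ^ 2 - (ξ 0) ^ 2| ≤ 2 * ‖ξ‖ ^ 2 := by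
    rw [EuclideanSpace.norm_sq_eq, Fin.sum_univ_three, abs_le]
    simp only [Real.norm_eq_abs, sq_abs]
    constructor <;> nlinarith [sq_nonneg (ξ 0), sq_nonneg (ξ 1), sq_nonneg (ξ 2)]
  nlinarith [mul_le_mul_of_nonneg_left key (by positivity : 0 ≤ 4 * Real.pi / 3)]

lemma integrable_pow_mul_norm_dipm_mul (F : 𝓢(EuclideanSpace ℝ (Fin 3), ℂ)) (n : ℕ) :
    Integrable (fun ξ => ‖ξ‖ ^ n * ‖(dipm ξ : ℂ) * F (-ξ)‖) := by
  have h1 : Integrable (fun ξ => ‖ξ‖ ^ n * ‖F (-ξ)‖) := by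
    simpa using (F.integrable_pow_mul volume n).comp_neg
  refine (h1.const_mul (8 * Real.pi / 3)).mono' ?_ (.of_forall fun ξ => ?_)
  · have := measurable_dipm
    have := F.continuous.measurable
    fun_prop
  · rw [Real.norm_of_nonneg (by positivity), norm_mul, Complex.norm_real, Real.norm_eq_abs]
    calc _ = |dipm ξ| * (‖ξ‖ ^ n * ‖F (-ξ)‖) := by ring
      _ ≤ _ := by gcongr; exact abs_dipm_le ξ

lemma integrable_dipm_mul (F : 𝓢(EuclideanSpace ℝ (Fin 3), ℂ)) :
    Integrable (fun ξ => (dipm ξ : ℂ) * F (-ξ)) := by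
  rw [← integrable_norm_iff]
  · simpa using integrable_pow_mul_norm_dipm_mul F 0
  · have := measurable_dipm
    have := F.continuous.measurable
    fun_prop

section Fourier

variable {V : Type*} [NormedAddCommGroup V] [InnerProductSpace ℝ V] [FiniteDimensional ℝ V]
  [MeasurableSpace V] [BorelSpace V]

lemma norm_fourier_le_integral_norm {E : Type*} [NormedAddCommGroup E] [NormedSpace ℂ E]
    (f : V → E) (w : V) : ‖𝓕 f w‖ ≤ ∫ v, ‖f v‖ :=
  VectorFourier.norm_fourierIntegral_le_integral_norm _ _ _ _ _

/-- The gradient of `𝓕 k` is bounded by the first absolute moment of `k`. -/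
lemma norm_fderiv_fourier_le {k : V → ℂ} (hk : Integrable k)
    (hk' : Integrable (fun v => ‖v‖ * ‖k v‖)) (x : V) :
    ‖fderiv ℝ (𝓕 k) x‖ ≤
      ∫ v, ‖VectorFourier.fourierSMulRight (innerSL ℝ) k v‖ := by
  rw [Real.fderiv_fourier hk hk']
  exact norm_fourier_le_integral_norm _ _

/-- Self-adjointness of the Fourier transform, with a dilation. -/
lemma integral_fourier_smul_mul {k φ : V → ℂ} (hk : Integrable k) (hφ : Integrable φ) (c : ℝ) :
    ∫ x, 𝓕 k (c • x) * φ x = ∫ ξ, k ξ * 𝓕 φ (c • ξ) := by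
  have h := VectorFourier.integral_fourierIntegral_smul_eq_flip (μ := volume) (ν := volume)
    (e := Real.fourierChar) (L := c • innerₗ V) Real.continuous_fourierChar
    (by simp only [LinearMap.smul_apply, innerₗ_apply_apply]; fun_prop) hk hφ
  simp only [smul_eq_mul] at h
  have h1 (x : V) : VectorFourier.fourierIntegral Real.fourierChar volume (c • innerₗ V) k x =
      𝓕 k (c • x) := by
    simp [Real.fourier_eq, VectorFourier.fourierIntegral, inner_smul_right]
  have h2 (ξ : V) : VectorFourier.fourierIntegral Real.fourierChar volume (c • innerₗ V).flip φ ξ =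
      𝓕 φ (c • ξ) := by
    simp [Real.fourier_eq, VectorFourier.fourierIntegral, inner_smul_right, real_inner_comm]
  simpa only [h1, h2] using h

end Fourier

/-- Differentiating `∫ g(cx) φ(x) dx` in `c` at `c = 1`. -/
lemma hasDerivAt_integral_comp_smul {V : Type*} [NormedAddCommGroup V] [NormedSpace ℝ V]
    [MeasurableSpace V] [BorelSpace V] [SecondCountableTopology V] {μ : Measure V}
    {g φ : V → ℂ} {B : ℝ} (hg : ContDiff ℝ 1 g) (hB : ∀ x, ‖fderiv ℝ g x‖ ≤ B)
    (hφ : AEStronglyMeasurable φ μ) (hgφ : Integrable (fun x => g x * φ x) μ)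
    (hxφ : Integrable (fun x => ‖x‖ * ‖φ x‖) μ) :
    Integrable (fun x => fderiv ℝ g x x * φ x) μ ∧
    HasDerivAt (fun c : ℝ => ∫ x, g (c • x) * φ x ∂μ) (∫ x, fderiv ℝ g x x * φ x ∂μ) 1 := by
  have hgc := hg.continuous
  have hg'c : Continuous (fderiv ℝ g) := hg.continuous_fderiv one_ne_zero
  have := hasDerivAt_integral_of_dominated_loc_of_deriv_le (μ := μ) (s := Set.univ)
    (F := fun (c : ℝ) x => g (c • x) * φ x) (F' := fun c x => fderiv ℝ g (c • x) x * φ x)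
    (x₀ := 1) (bound := fun x => B * (‖x‖ * ‖φ x‖)) Filter.univ_mem
    (.of_forall fun c => (by fun_prop : Continuous fun x => g (c • x)).aestronglyMeasurable.mul hφ)
    (by simpa using hgφ)
    ((by fun_prop : Continuous fun x => fderiv ℝ g ((1 : ℝ) • x) x).aestronglyMeasurable.mul hφ)
    (.of_forall fun x c _ => ?_) (hxφ.const_mul B) (.of_forall fun x c _ => ?_)
  · simpa using this
  · rw [norm_mul, ← mul_assoc]
    gcongr
    exact ((fderiv ℝ g (c • x)).le_opNorm x).trans (by gcongr; exact hB _)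
  · have h1 : HasDerivAt (fun c : ℝ => c • x) x c := by
      simpa using (hasDerivAt_id c).smul_const x
    exact (((hg.differentiable one_ne_zero _).hasFDerivAt.comp_hasDerivAt c h1)).mul_const _

/-- Reflection of the dilation parameter in the quadratic form with symbol `dipm`. -/
lemma integral_dipm_mul_inv (F : EuclideanSpace ℝ (Fin 3) → ℂ) {c : ℝ} (hc : 0 < c) :
    ∫ ξ, (dipm ξ : ℂ) * F (-ξ) * F (c • ξ) =
      ((c⁻¹ ^ 3 : ℝ) : ℂ) * ∫ ξ, (dipm ξ : ℂ) * F (-ξ) * F (c⁻¹ • ξ) := by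
  have h := Measure.integral_comp_smul volume
    (fun ξ : EuclideanSpace ℝ (Fin 3) => (dipm ξ : ℂ) * F (-ξ) * F (c⁻¹ • ξ)) (-c)
  have hc' := hc.ne'
  simp only [finrank_euclideanSpace, Fintype.card_fin, neg_smul, neg_neg, dipm_neg,
    dipm_smul hc', smul_neg, inv_smul_smul₀ hc'] at h
  rw [show |((-c) ^ 3)⁻¹| = c⁻¹ ^ 3 by
    rw [abs_inv, abs_pow, abs_neg, abs_of_pos hc, inv_pow], Complex.real_smul] at h
  rw [← h]
  congr 1 with ξ
  ring

/-- A function with `J c = c⁻³ J(c⁻¹)` for `c > 0` satisfies `2 J'(1) = -3 J(1)`. -/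
lemma two_mul_deriv_eq_of_inv_symm {J : ℝ → ℂ} {J' : ℂ} (hJ : HasDerivAt J J' 1)
    (hsymm : ∀ c : ℝ, 0 < c → J c = ((c⁻¹ ^ 3 : ℝ) : ℂ) * J c⁻¹) :
    2 * J' = -3 * J 1 := by
  have h1 : HasDerivAt (fun c : ℝ => c⁻¹) (-1) 1 := by
    simpa using hasDerivAt_inv (one_ne_zero (α := ℝ))
  have h2 : HasDerivAt (fun c : ℝ => ((c⁻¹ ^ 3 : ℝ) : ℂ)) (-3) 1 := by
    simpa using (h1.pow 3).ofReal_comp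
  have h3 : HasDerivAt (fun c : ℝ => J c⁻¹) (-J') 1 := by
    have : HasDerivAt J J' (1 : ℝ)⁻¹ := by simpa using hJ
    simpa [Function.comp_def] using this.scomp (1 : ℝ) h1
  have h4 := (h2.mul h3).congr_of_eventuallyEq (f₁ := J)
    ((lt_mem_nhds one_pos).mono fun c hc => hsymm c hc)
  have h5 := hJ.unique h4
  simp only [inv_one, one_pow, Complex.ofReal_one, one_mul] at h5
  linear_combination h5

lemma sum_coord_mul_eq (L : EuclideanSpace ℝ (Fin 3) →L[ℝ] ℂ) (x : EuclideanSpace ℝ (Fin 3)) :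
    ∑ j : Fin 3, (x j : ℂ) * L (EuclideanSpace.single j (1 : ℝ)) = L x := by
  conv_rhs => rw [← (EuclideanSpace.basisFun (Fin 3) ℝ).sum_repr x]
  simp

/-- The Fourier transform of a Hermitian-symmetric function is real-valued. -/
lemma im_fourier_eq_zero {V : Type*} [NormedAddCommGroup V] [InnerProductSpace ℝ V]
    [FiniteDimensional ℝ V] [MeasurableSpace V] [BorelSpace V] {k : V → ℂ}
    (hk : ∀ v, (starRingEnd ℂ) (k v) = k (-v)) (x : V) : (𝓕 k x).im = 0 := by
  rw [← Complex.conj_eq_iff_im, Real.fourier_eq', ← integral_conj, ← integral_neg_eq_self]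
  congr 1 with v
  simp [hk, ← Complex.exp_conj, Complex.conj_ofNat]

lemma conj_fourier_ofReal {V : Type*} [NormedAddCommGroup V] [InnerProductSpace ℝ V]
    [FiniteDimensional ℝ V] [MeasurableSpace V] [BorelSpace V] (f : V → ℝ) (x : V) :
    (starRingEnd ℂ) (𝓕 (fun y => (f y : ℂ)) x) = 𝓕 (fun y => (f y : ℂ)) (-x) := by
  rw [Real.fourier_eq', Real.fourier_eq', ← integral_conj]
  congr 1 with v
  simp [← Complex.exp_conj, Complex.conj_ofNat]

/-- For real Schwartz `f` and `g := 𝓕⁻¹(m·𝓕f) = K ∗ f`: `g` is bounded,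
real-valued, `C¹` with bounded gradient, the relevant integrals converge
absolutely, and `2∫ (x·∇g) f = −3∫ g f` (since `ξ·∇_ξ m(ξ) = 0`). -/
theorem dipolar_kernel_dilation_identity
    (f : SchwartzMap (EuclideanSpace ℝ (Fin 3)) ℝ) :
    let g : EuclideanSpace ℝ (Fin 3) → ℂ :=
      fun x => 𝓕⁻ (fun ξ => (dipm ξ : ℂ) * 𝓕 (fun y => ((f y : ℝ) : ℂ)) ξ) x
    (∀ x, (g x).im = 0) ∧
    (∃ B : ℝ, ∀ x, ‖g x‖ ≤ B) ∧
    ContDiff ℝ 1 g ∧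
    (∃ B : ℝ, ∀ x, ‖fderiv ℝ g x‖ ≤ B) ∧
    Integrable (fun x =>
      (∑ j : Fin 3, (x j : ℂ) * fderiv ℝ g x (EuclideanSpace.single j (1 : ℝ))) *
        ((f x : ℝ) : ℂ)) ∧
    Integrable (fun x => g x * ((f x : ℝ) : ℂ)) ∧
    2 * ∫ x, (∑ j : Fin 3,
        (x j : ℂ) * fderiv ℝ g x (EuclideanSpace.single j (1 : ℝ))) * ((f x : ℝ) : ℂ) =
      -3 * ∫ x, g x * ((f x : ℝ) : ℂ) := by
  intro g
  let φ : 𝓢(EuclideanSpace ℝ (Fin 3), ℂ) := f.postcompCLM Complex.ofRealCLM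
  let F : 𝓢(EuclideanSpace ℝ (Fin 3), ℂ) := 𝓕 φ
  let k : EuclideanSpace ℝ (Fin 3) → ℂ := fun ξ => (dipm ξ : ℂ) * F (-ξ)
  have hF : ∀ ξ, 𝓕 (fun y => ((f y : ℝ) : ℂ)) ξ = F ξ := fun ξ => rfl
  have hgk : g = 𝓕 k := by
    funext x
    simp only [g, k, hF, Real.fourierInv_eq_fourier_comp_neg, dipm_neg]
  have hk : Integrable k := integrable_dipm_mul F
  have hk' : Integrable (fun ξ => ‖ξ‖ * ‖k ξ‖) := by
    simpa only [pow_one] using integrable_pow_mul_norm_dipm_mul F 1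
  have hg : ContDiff ℝ 1 g := by
    rw [hgk]
    exact Real.contDiff_fourier (N := 1) fun n _ => integrable_pow_mul_norm_dipm_mul F n
  have hgB : ∀ x, ‖g x‖ ≤ ∫ ξ, ‖k ξ‖ := by
    rw [hgk]
    exact norm_fourier_le_integral_norm k
  have hg'B := norm_fderiv_fourier_le hk hk'
  rw [← hgk] at hg'B
  have hφ : Integrable (fun x => ((f x : ℝ) : ℂ)) := φ.integrable
  have hxφ : Integrable (fun x => ‖x‖ * ‖((f x : ℝ) : ℂ)‖) := by
    simpa using f.integrable_pow_mul volume 1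
  have hgφ : Integrable (fun x => g x * ((f x : ℝ) : ℂ)) :=
    hφ.bdd_mul hg.continuous.aestronglyMeasurable (.of_forall hgB)
  obtain ⟨hint, hderiv⟩ :=
    hasDerivAt_integral_comp_smul hg hg'B hφ.aestronglyMeasurable hgφ hxφ
  have hJ : ∀ c : ℝ, ∫ x, g (c • x) * ((f x : ℝ) : ℂ) =
      ∫ ξ, (dipm ξ : ℂ) * F (-ξ) * F (c • ξ) := fun c => by
    rw [hgk, integral_fourier_smul_mul hk hφ c]
    rfl
  simp only [sum_coord_mul_eq]
  refine ⟨fun x => ?_, ⟨_, hgB⟩, hg, ⟨_, hg'B⟩, hint, hgφ, ?_⟩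
  · rw [hgk]
    refine im_fourier_eq_zero (fun ξ => ?_) x
    simp only [k, map_mul, Complex.conj_ofReal, dipm_neg, ← hF, conj_fourier_ofReal]
  · simpa using two_mul_deriv_eq_of_inv_symm hderiv fun c hc => by
      simp only [hJ]
      exact integral_dipm_mul_inv F hc

end
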